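/- Fix an integer n ≥ 1. Let 𝒮 be the set of biquadratic fields K = ℚ(√a, √b) ⊆ ℂ with a, b odd squarefree integers and [K:ℚ] = 4. Then the set of K ∈ 𝒮 with genus number 2ⁿ (i.e. with ω(|Δ_K|) = n + 2) has density zero in 𝒮: the ratio #{K ∈ 𝒮 : ω(|Δ_K|) = n + 2, |Δ_K| ≤ X} / #{K ∈ 𝒮 : |Δ_K| ≤ X} tends to 0 as X → ∞. -/

import Mathlib

open IntermediateField NumberField Filter
noncomputable section
open scoped Classical
def biquad (d₁ d₂ : ℤ) : IntermediateField ℚ ℂ :=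
  IntermediateField.adjoin ℚ {x : ℂ | x ^ 2 = (d₁ : ℂ) ∨ x ^ 2 = (d₂ : ℂ)}
def biquadFamily : Set (IntermediateField ℚ ℂ) :=
  {K | ∃ a b : ℤ, Odd a ∧ Odd b ∧ Squarefree a ∧ Squarefree b ∧
    Module.finrank ℚ K = 4 ∧ K = biquad a b}
def absDisc (K : IntermediateField ℚ ℂ) : ℕ :=
  if h : FiniteDimensional ℚ K then
    haveI := h
    haveI : NumberField K := ⟨⟩
    (NumberField.discr K).natAbs
  else 0
/-- The number of `K ∈ 𝒮` with genus number `2ⁿ` (i.e. `ω(|Δ_K|) = n + 2`) and `|Δ_K| ≤ X`. -/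
def countSn (n : ℕ) (X : ℝ) : ℕ :=
  Nat.card {K : IntermediateField ℚ ℂ // K ∈ biquadFamily ∧
    (absDisc K).primeFactors.card = n + 2 ∧ (absDisc K : ℝ) ≤ X}
def countS (X : ℝ) : ℕ :=
  Nat.card {K : IntermediateField ℚ ℂ // K ∈ biquadFamily ∧ (absDisc K : ℝ) ≤ X}

/-!
If `α ∈ 𝓞 K` satisfies `α² = a` with `a` squarefree, then `(α x)² ∈ a 𝓞 K`, so multiplication by
`α x` is nilpotent modulo `a` and its trace is divisible by `a`. Taking `x = wᵢ wⱼ` for an integral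
basis `w` gives `a ^ [K : ℚ] ∣ N(α) Δ_K`, hence `a ^ ([K : ℚ] / 2) ∣ Δ_K`. For `K = ℚ(√a, √b)` this
yields `lcm(a, b)² ∣ Δ_K`: a field with `|Δ_K| ≤ X` comes from two divisors of some `m ≤ √X`, and
when `ω(Δ_K)` is bounded each `m` has boundedly many divisors, so there are only `O(√X)` such
fields.

On the other hand, the fields `ℚ(√p, √-b)` with `p` prime and `b` odd, squarefree and prime to `p`
are pairwise distinct and have `|Δ_K| ≤ (24 p b)²`. For each prime `p ≥ 5` they contribute at least
`√X / (480 p) - 1` fields with `|Δ_K| ≤ X`, and since `∑ 1 / p` diverges the whole family outgrows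
every multiple of `√X`.
-/

section Trace

variable {R B ι : Type*} [CommRing R] [CommRing B] [Algebra R B]

theorem dvd_trace_of_sq_eq_smul_of_isRadical [Finite ι] (w : Module.Basis ι R B) {a : R}
    (ha : IsRadical a) {x y : B} (hx : x ^ 2 = a • y) : a ∣ Algebra.trace R B x := by
  have := Fintype.ofFinite ι
  let π := Ideal.Quotient.mk (Ideal.span {a})
  let M := (Algebra.leftMulMatrix w x).map π
  have hM : IsNilpotent M := by
    refine ⟨2, ?_⟩
    have hπa : π a = 0 := Ideal.Quotient.eq_zero_iff_mem.2 (Ideal.mem_span_singleton_self a)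
    calc M ^ 2 = π.mapMatrix (Algebra.leftMulMatrix w (x ^ 2)) := by
          rw [map_pow, map_pow, RingHom.mapMatrix_apply]
      _ = 0 := by
        ext i j
        simp [hx, hπa]
  have htr : M.trace = π (Algebra.trace R B x) := by
    rw [Algebra.trace_eq_matrix_trace w]
    exact (AddMonoidHom.map_trace π _).symm
  obtain ⟨k, hk⟩ := Matrix.isNilpotent_trace_of_isNilpotent hM
  rw [htr, ← map_pow, Ideal.Quotient.eq_zero_iff_mem, Ideal.mem_span_singleton] at hk
  exact ha _ _ hk

theorem pow_card_dvd_norm_mul_discr [Fintype ι] [DecidableEq ι] (w : Module.Basis ι R B) {a : R}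
    (ha : IsRadical a) {α : B} (hα : α ^ 2 = algebraMap R B a) :
    a ^ Fintype.card ι ∣ Algebra.norm R α * Algebra.discr R w := by
  have hdvd : ∀ i j, a ∣ Algebra.trace R B (α * w i * w j) := fun i j =>
    dvd_trace_of_sq_eq_smul_of_isRadical w ha (y := (w i * w j) ^ 2) (by
      rw [mul_assoc, mul_pow, hα, Algebra.smul_def])
  choose N hN using hdvd
  have hmul :
      (Algebra.leftMulMatrix w α).transpose * Algebra.traceMatrix R w = a • Matrix.of N := by
    ext i j
    rw [Matrix.smul_apply, Matrix.of_apply, smul_eq_mul, ← hN, Matrix.mul_apply]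
    conv_rhs => rw [← w.sum_repr (α * w i), Finset.sum_mul, map_sum]
    simp [Algebra.traceMatrix_apply, Algebra.traceForm_apply, Algebra.leftMulMatrix_eq_repr_mul]
  refine ⟨(Matrix.of N).det, ?_⟩
  rw [← Matrix.det_smul, ← hmul, Matrix.det_mul, Matrix.det_transpose,
    ← Algebra.norm_eq_matrix_det w, Algebra.discr_def]

end Trace

section Discriminant

theorem isIntegral_of_sq_eq_intCast (R : Type*) {B : Type*} [CommRing R] [Ring B] [Algebra R B]
    {n : ℤ} {x : B} (hx : x ^ 2 = n) : IsIntegral R x :=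
  .of_pow two_pos (by simpa [hx] using isIntegral_algebraMap (R := R) (A := B) (x := (n : R)))

variable {K : Type*} [Field K] [NumberField K]

theorem pow_dvd_discr_of_sq_eq {m : ℕ} (hK : Module.finrank ℚ K = 2 * m) {a : ℤ}
    (ha : Squarefree a) {α : K} (hα : α ^ 2 = a) : a ^ m ∣ discr K := by
  have hint : IsIntegral ℤ α := isIntegral_of_sq_eq_intCast ℤ hα
  obtain ⟨β, rfl⟩ : ∃ β : 𝓞 K, algebraMap (𝓞 K) K β = α := ⟨⟨α, hint⟩, rfl⟩
  have hβ : β ^ 2 = algebraMap ℤ (𝓞 K) a := RingOfIntegers.ext (by simp [hα])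
  have hrank : Module.finrank ℤ (𝓞 K) = 2 * m := (RingOfIntegers.rank K).trans hK
  have hnorm : Algebra.norm ℤ β = a ^ m ∨ Algebra.norm ℤ β = -a ^ m := by
    rw [← sq_eq_sq_iff_eq_or_eq_neg, ← map_pow, hβ, Algebra.norm_algebraMap, hrank, mul_comm,
      pow_mul]
  have hdvd : a ^ m * a ^ m ∣ a ^ m * discr K := by
    have h := pow_card_dvd_norm_mul_discr (RingOfIntegers.basis K) ha.isRadical hβ
    rw [← Module.finrank_eq_card_chooseBasisIndex, hrank, two_mul, pow_add,
      discr_eq_discr K (RingOfIntegers.basis K)] at h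
    rcases hnorm with hn | hn <;> simpa [hn] using h
  exact (mul_dvd_mul_iff_left (pow_ne_zero m ha.ne_zero)).1 hdvd

theorem exists_discr_basis_eq_sq_mul_discr {ι : Type*} [Fintype ι] [DecidableEq ι]
    (v : Module.Basis ι ℚ K) (hv : ∀ i, IsIntegral ℤ (v i)) :
    ∃ k : ℤ, Algebra.discr ℚ v = k ^ 2 * discr K := by
  let f := (integralBasis K).indexEquiv v
  let w := (integralBasis K).reindex f
  have hw : Algebra.discr ℚ w = discr K := by
    rw [coe_discr, Module.Basis.coe_reindex, Algebra.discr_reindex]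
  have hP : IsIntegral ℤ (w.toMatrix v).det := by
    refine IsIntegral.det fun i j => ?_
    have hrepr := integralBasis_repr_apply K ⟨v j, hv j⟩ (f.symm i)
    rw [Module.Basis.toMatrix_apply, Module.Basis.repr_reindex_apply]
    exact hrepr ▸ isIntegral_algebraMap
  obtain ⟨k, hk⟩ := IsIntegrallyClosed.isIntegral_iff.1 hP
  refine ⟨k, ?_⟩
  have h := Algebra.discr_of_matrix_vecMul w (w.toMatrix v)
  rw [Module.Basis.toMatrix_map_vecMul, hw, ← hk] at h
  simpa using h

theorem abs_discr_le_abs_discr_basis {ι : Type*} [Fintype ι] [DecidableEq ι]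
    (v : Module.Basis ι ℚ K) (hv : ∀ i, IsIntegral ℤ (v i)) :
    |(discr K : ℚ)| ≤ |Algebra.discr ℚ v| := by
  obtain ⟨k, hk⟩ := exists_discr_basis_eq_sq_mul_discr v hv
  have hk0 : k ≠ 0 := by
    rintro rfl
    exact Algebra.discr_not_zero_of_basis ℚ v (by simpa using hk)
  have hk1 : (1 : ℚ) ≤ k ^ 2 := by
    exact_mod_cast Int.add_one_le_iff.2 (sq_pos_of_ne_zero hk0)
  rw [hk, abs_mul, abs_of_nonneg (sq_nonneg (k : ℚ))]
  exact le_mul_of_one_le_left (abs_nonneg _) hk1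

theorem norm_det_le_factorial_mul_prod {ι : Type*} [Fintype ι] [DecidableEq ι]
    {𝕜 : Type*} [NormedField 𝕜] {M : Matrix ι ι 𝕜} {r : ι → ℝ} (hM : ∀ i j, ‖M i j‖ ≤ r i) :
    ‖M.det‖ ≤ (Fintype.card ι).factorial * ∏ i, r i := by
  rw [← Matrix.det_transpose, Matrix.det_apply]
  calc ‖∑ σ : Equiv.Perm ι, Equiv.Perm.sign σ • ∏ i, M.transpose (σ i) i‖
      ≤ ∑ _σ : Equiv.Perm ι, ∏ i, r i := by
        refine norm_sum_le_of_le _ fun σ _ => ?_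
        rw [Units.smul_def, zsmul_eq_mul, norm_mul, norm_prod]
        rcases Int.units_eq_one_or (Equiv.Perm.sign σ) with hσ | hσ <;>
          simpa [hσ] using Finset.prod_le_prod (fun i _ => norm_nonneg _) fun i _ => hM i (σ i)
    _ = (Fintype.card ι).factorial * ∏ i, r i := by simp [Fintype.card_perm]

theorem abs_discr_le_of_sq_eq {ι : Type*} [Fintype ι] (v : Module.Basis ι ℚ K)
    {c : ι → ℤ} (hv : ∀ i, v i ^ 2 = c i) :
    |discr K| ≤ (Fintype.card ι).factorial ^ 2 * ∏ i, |c i| := by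
  have hint : ∀ i, IsIntegral ℤ (v i) := fun i => isIntegral_of_sq_eq_intCast ℤ (hv i)
  have hnorm : ∀ (φ : K →ₐ[ℚ] ℂ) i, ‖φ (v i)‖ ≤ √|(c i : ℝ)| := fun φ i => by
    refine Real.le_sqrt_of_sq_le (le_of_eq ?_)
    rw [← norm_pow, ← map_pow, hv, map_intCast, Complex.norm_intCast]
  have e : ι ≃ (K →ₐ[ℚ] ℂ) := Fintype.equivOfCardEq
    ((Module.finrank_eq_card_basis v).symm.trans (AlgHom.card ℚ K ℂ).symm)
  have hdet := norm_det_le_factorial_mul_prod (M := Algebra.embeddingsMatrixReindex ℚ ℂ v e)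
    (r := fun i => √|(c i : ℝ)|) fun i j => hnorm (e j) i
  have hdiscr : |(Algebra.discr ℚ v : ℝ)| ≤ (Fintype.card ι).factorial ^ 2 * ∏ i, |(c i : ℝ)| :=
    calc |(Algebra.discr ℚ v : ℝ)| = ‖algebraMap ℚ ℂ (Algebra.discr ℚ v)‖ := by simp
      _ = ‖(Algebra.embeddingsMatrixReindex ℚ ℂ v e).det‖ ^ 2 := by
        rw [Algebra.discr_eq_det_embeddingsMatrixReindex_pow_two ℚ ℂ v e, norm_pow]
      _ ≤ ((Fintype.card ι).factorial * ∏ i, √|(c i : ℝ)|) ^ 2 := by gcongr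
      _ = (Fintype.card ι).factorial ^ 2 * ∏ i, |(c i : ℝ)| := by
        simp_rw [mul_pow, ← Finset.prod_pow, Real.sq_sqrt (abs_nonneg _)]
  have hbasis : |(discr K : ℝ)| ≤ |(Algebra.discr ℚ v : ℝ)| := by
    exact_mod_cast abs_discr_le_abs_discr_basis v hint
  exact_mod_cast hbasis.trans hdiscr

end Discriminant

section SquareClasses

theorem dvd_of_squarefree_of_isSquare_mul {M : Type*} [CommMonoidWithZero M] [IsCancelMulZero M]
    [Nontrivial M] [DecompositionMonoid M] {u v : M} (hu : Squarefree u) (h : IsSquare (u * v)) :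
    u ∣ v := by
  obtain ⟨r, hr⟩ := h
  obtain ⟨s, rfl⟩ : u ∣ r := (hu.dvd_pow_iff_dvd two_ne_zero).1 ⟨v, by rw [sq, hr]⟩
  rw [mul_assoc] at hr
  exact ⟨s * s, by rw [mul_left_cancel₀ hu.ne_zero hr]; ac_rfl⟩

variable {F E : Type*} [Field F] [Field E] [Algebra F E] {α β x : E}

theorem exists_eq_add_mul_of_mem_adjoin_simple (hα : α ^ 2 ∈ (⊥ : IntermediateField F E))
    (hx : x ∈ F⟮α⟯) :
    ∃ p ∈ (⊥ : IntermediateField F E), ∃ q ∈ (⊥ : IntermediateField F E), x = p + q * α := by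
  have hint : IsAlgebraic F α := by
    obtain ⟨c, hc⟩ := mem_bot.1 hα
    exact (IsIntegral.of_pow two_pos (hc ▸ isIntegral_algebraMap)).isAlgebraic
  rw [← mem_toSubalgebra, adjoin_simple_toSubalgebra_of_isAlgebraic hint] at hx
  induction hx using Algebra.adjoin_induction with
  | mem y hy => exact ⟨0, zero_mem _, 1, one_mem _, by rw [Set.mem_singleton_iff.1 hy]; ring⟩
  | algebraMap c => exact ⟨algebraMap F E c, mem_bot.2 ⟨c, rfl⟩, 0, zero_mem _, by ring⟩
  | add y z _ _ hy hz =>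
    obtain ⟨p, hp, q, hq, rfl⟩ := hy
    obtain ⟨p', hp', q', hq', rfl⟩ := hz
    exact ⟨p + p', add_mem hp hp', q + q', add_mem hq hq', by ring⟩
  | mul y z _ _ hy hz =>
    obtain ⟨p, hp, q, hq, rfl⟩ := hy
    obtain ⟨p', hp', q', hq', rfl⟩ := hz
    exact ⟨p * p' + q * q' * α ^ 2, add_mem (mul_mem hp hp') (mul_mem (mul_mem hq hq') hα),
      p * q' + q * p', add_mem (mul_mem hp hq') (mul_mem hq hp'), by ring⟩

theorem mem_bot_or_mul_mem_bot_of_mem_adjoin_simple (h2 : (2 : E) ≠ 0)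
    (hα : α ^ 2 ∈ (⊥ : IntermediateField F E)) (hx : x ∈ F⟮α⟯)
    (hx2 : x ^ 2 ∈ (⊥ : IntermediateField F E)) :
    x ∈ (⊥ : IntermediateField F E) ∨ x * α ∈ (⊥ : IntermediateField F E) := by
  obtain ⟨p, hp, q, hq, rfl⟩ := exists_eq_add_mul_of_mem_adjoin_simple hα hx
  rcases eq_or_ne p 0 with rfl | hp0
  · exact .inr (by convert mul_mem hq hα using 1; ring)
  rcases eq_or_ne q 0 with rfl | hq0
  · exact .inl (by simpa using hp)
  have hαmem : α ∈ (⊥ : IntermediateField F E) := by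
    have hcross : α = ((p + q * α) ^ 2 - p ^ 2 - q ^ 2 * α ^ 2) / (2 * p * q) := by
      field_simp
      ring
    rw [hcross]
    exact div_mem (sub_mem (sub_mem hx2 (pow_mem hp 2)) (mul_mem (pow_mem hq 2) hα))
      (mul_mem (mul_mem (ofNat_mem _ 2) hp) hq)
  exact .inl (add_mem hp (mul_mem hq hαmem))

theorem mem_bot_of_mem_adjoin_pair (h2 : (2 : E) ≠ 0)
    (hα : α ^ 2 ∈ (⊥ : IntermediateField F E)) (hβ : β ^ 2 ∈ (⊥ : IntermediateField F E))
    (hx : x ∈ F⟮α, β⟯) (hx2 : x ^ 2 ∈ (⊥ : IntermediateField F E)) :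
    x ∈ (⊥ : IntermediateField F E) ∨ x * α ∈ (⊥ : IntermediateField F E) ∨
      x * β ∈ (⊥ : IntermediateField F E) ∨ x * β * α ∈ (⊥ : IntermediateField F E) := by
  have hlift : ∀ {y : E}, y ∈ (⊥ : IntermediateField F E) → y ∈ (⊥ : IntermediateField F⟮α⟯ E) :=
    fun hy => by
      obtain ⟨c, rfl⟩ := mem_bot.1 hy
      exact mem_bot.2 ⟨algebraMap F F⟮α⟯ c, (IsScalarTower.algebraMap_apply F F⟮α⟯ E c).symm⟩
  have hdescend : ∀ {y : E}, y ∈ (⊥ : IntermediateField F⟮α⟯ E) → y ∈ F⟮α⟯ := fun hy => by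
    obtain ⟨c, rfl⟩ := mem_bot.1 hy
    exact c.2
  rw [← adjoin_simple_adjoin_simple, mem_restrictScalars] at hx
  rcases mem_bot_or_mul_mem_bot_of_mem_adjoin_simple h2 (hlift hβ) hx (hlift hx2) with h | h
  · rcases mem_bot_or_mul_mem_bot_of_mem_adjoin_simple h2 hα (hdescend h) hx2 with h | h
    exacts [.inl h, .inr (.inl h)]
  · have hxβ : (x * β) ^ 2 ∈ (⊥ : IntermediateField F E) := mul_pow x β 2 ▸ mul_mem hx2 hβ
    rcases mem_bot_or_mul_mem_bot_of_mem_adjoin_simple h2 hα (hdescend h) hxβ with h | h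
    exacts [.inr (.inr (.inl h)), .inr (.inr (.inr h))]

theorem isSquare_of_mem_bot_of_sq_eq [Algebra ℚ E] {c : ℤ}
    (hx : x ∈ (⊥ : IntermediateField ℚ E)) (hxc : x ^ 2 = c) : IsSquare c := by
  obtain ⟨q, rfl⟩ := mem_bot.1 hx
  refine Rat.isSquare_intCast_iff.1 ⟨q, (algebraMap ℚ E).injective ?_⟩
  rw [map_intCast, ← sq, map_pow, hxc]

end SquareClasses

section Biquadratic

variable {a b : ℤ}

theorem finrank_adjoin_sqrt_le {F E : Type*} [Field F] [Field E] [Algebra F E] {n : ℤ} {x : E}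
    (hx : x ^ 2 = n) : Module.finrank F F⟮x⟯ ≤ 2 := by
  rw [adjoin.finrank (isIntegral_of_sq_eq_intCast F hx)]
  have hroot : Polynomial.aeval x (Polynomial.X ^ 2 - Polynomial.C (n : F)) = 0 := by simp [hx]
  exact (Polynomial.natDegree_le_natDegree (minpoly.min F x
    (Polynomial.monic_X_pow_sub_C _ two_ne_zero) hroot)).trans_eq Polynomial.natDegree_X_pow_sub_C

theorem biquad_eq_adjoin {α β : ℂ} (hα : α ^ 2 = a) (hβ : β ^ 2 = b) :
    biquad a b = ℚ⟮α, β⟯ := by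
  refine le_antisymm (adjoin_le_iff.2 ?_) (adjoin.mono _ _ _ ?_)
  · have hαmem : α ∈ ℚ⟮α, β⟯ := subset_adjoin _ _ (by simp)
    have hβmem : β ∈ ℚ⟮α, β⟯ := subset_adjoin _ _ (by simp)
    rintro x (hx | hx)
    · rcases sq_eq_sq_iff_eq_or_eq_neg.1 (hx.trans hα.symm) with rfl | rfl
      exacts [hαmem, neg_mem hαmem]
    · rcases sq_eq_sq_iff_eq_or_eq_neg.1 (hx.trans hβ.symm) with rfl | rfl
      exacts [hβmem, neg_mem hβmem]
  · rintro x (rfl | rfl)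
    exacts [.inl hα, .inr hβ]

theorem exists_biquad_eq_adjoin (a b : ℤ) :
    ∃ α β : ℂ, α ^ 2 = a ∧ β ^ 2 = b ∧ biquad a b = ℚ⟮α, β⟯ := by
  obtain ⟨α, hα⟩ := IsAlgClosed.exists_pow_nat_eq (a : ℂ) two_pos
  obtain ⟨β, hβ⟩ := IsAlgClosed.exists_pow_nat_eq (b : ℂ) two_pos
  exact ⟨α, β, hα, hβ, biquad_eq_adjoin hα hβ⟩

instance biquad_finiteDimensional (a b : ℤ) : FiniteDimensional ℚ (biquad a b) := by
  obtain ⟨α, β, hα, hβ, h⟩ := exists_biquad_eq_adjoin a b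
  exact h ▸ finiteDimensional_adjoin_pair (isIntegral_of_sq_eq_intCast ℚ hα)
    (isIntegral_of_sq_eq_intCast ℚ hβ)

theorem finrank_biquad_le (a b : ℤ) : Module.finrank ℚ (biquad a b) ≤ 4 := by
  obtain ⟨α, β, hα, hβ, h⟩ := exists_biquad_eq_adjoin a b
  have hsup : biquad a b = ℚ⟮α⟯ ⊔ ℚ⟮β⟯ := by rw [h, ← adjoin_union, Set.singleton_union]
  rw [hsup]
  exact (finrank_sup_le _ _).trans
    (Nat.mul_le_mul (finrank_adjoin_sqrt_le hα) (finrank_adjoin_sqrt_le hβ))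

instance biquad_numberField (a b : ℤ) : NumberField (biquad a b) where

theorem isSquare_of_mem_biquad {c : ℤ} {z : ℂ} (hz : z ∈ biquad a b) (hzc : z ^ 2 = c) :
    IsSquare c ∨ IsSquare (c * a) ∨ IsSquare (c * b) ∨ IsSquare (c * b * a) := by
  obtain ⟨α, β, hα, hβ, h⟩ := exists_biquad_eq_adjoin a b
  rw [h] at hz
  have hmem : ∀ {y : ℂ} {n : ℤ}, y ^ 2 = n → y ^ 2 ∈ (⊥ : IntermediateField ℚ ℂ) :=
    fun hy => hy ▸ intCast_mem _ _
  rcases mem_bot_of_mem_adjoin_pair two_ne_zero (hmem hα) (hmem hβ) hz (hmem hzc) with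
    h | h | h | h
  · exact .inl (isSquare_of_mem_bot_of_sq_eq h hzc)
  · exact .inr (.inl (isSquare_of_mem_bot_of_sq_eq h (by push_cast; rw [mul_pow, hzc, hα])))
  · exact .inr (.inr (.inl (isSquare_of_mem_bot_of_sq_eq h (by push_cast; rw [mul_pow, hzc, hβ]))))
  · exact .inr (.inr (.inr (isSquare_of_mem_bot_of_sq_eq h
      (by push_cast; rw [mul_pow, mul_pow, hzc, hα, hβ]))))

theorem absDisc_eq_natAbs_discr (K : IntermediateField ℚ ℂ) [NumberField K] :
    absDisc K = (discr K).natAbs := by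
  have : FiniteDimensional ℚ K := NumberField.to_finiteDimensional
  rw [absDisc, dif_pos this]

theorem absDisc_ne_zero (K : IntermediateField ℚ ℂ) [NumberField K] : absDisc K ≠ 0 := by
  rw [absDisc_eq_natAbs_discr, Int.natAbs_ne_zero]
  exact discr_ne_zero K

theorem natAbs_sq_dvd_absDisc {K : IntermediateField ℚ ℂ} (hK : Module.finrank ℚ K = 4)
    (ha : Squarefree a) {α : ℂ} (hαK : α ∈ K) (hα : α ^ 2 = a) : a.natAbs ^ 2 ∣ absDisc K := by
  have : FiniteDimensional ℚ K := .of_finrank_pos (by omega)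
  have : NumberField K := ⟨⟩
  have hdvd : a ^ 2 ∣ discr K :=
    pow_dvd_discr_of_sq_eq (m := 2) hK ha (α := ⟨α, hαK⟩) (Subtype.ext (by simpa using hα))
  rw [absDisc_eq_natAbs_discr, ← Int.natAbs_pow]
  exact Int.natAbs_dvd_natAbs.2 hdvd

theorem lcm_sq_dvd_absDisc_biquad (h : Module.finrank ℚ (biquad a b) = 4) (ha : Squarefree a)
    (hb : Squarefree b) : a.natAbs.lcm b.natAbs ^ 2 ∣ absDisc (biquad a b) := by
  obtain ⟨α, hα⟩ := IsAlgClosed.exists_pow_nat_eq (a : ℂ) two_pos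
  obtain ⟨β, hβ⟩ := IsAlgClosed.exists_pow_nat_eq (b : ℂ) two_pos
  rw [← Nat.pow_lcm_pow]
  exact Nat.lcm_dvd (natAbs_sq_dvd_absDisc h ha (subset_adjoin _ _ (.inl hα)) hα)
    (natAbs_sq_dvd_absDisc h hb (subset_adjoin _ _ (.inr hβ)) hβ)

theorem not_isSquare_neg_natCast {m : ℕ} (hm : m ≠ 0) : ¬IsSquare (-m : ℤ) := fun h =>
  absurd h.nonneg (by omega)

theorem prime_eq_of_biquad_neg_eq {p p' b b' : ℕ} (hp : p.Prime) (hp' : p'.Prime) (hb : b ≠ 0)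
    (h : biquad p (-b) = biquad p' (-b')) : p = p' := by
  obtain ⟨z, hz⟩ := IsAlgClosed.exists_pow_nat_eq (p' : ℂ) two_pos
  have hmem : z ∈ biquad p (-b) := h ▸ subset_adjoin _ _ (.inl (by simpa using hz))
  have hneg := not_isSquare_neg_natCast (mul_ne_zero hp'.ne_zero hb)
  have hneg' := not_isSquare_neg_natCast (mul_ne_zero (mul_ne_zero hp'.ne_zero hb) hp.ne_zero)
  rcases isSquare_of_mem_biquad (c := p') hmem (by simpa using hz) with hsq | hsq | hsq | hsq
  · exact absurd (Int.isSquare_natCast_iff.1 hsq) hp'.prime.not_isSquare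
  · have hdvd : p' ∣ p := dvd_of_squarefree_of_isSquare_mul hp'.prime.squarefree
      (Int.isSquare_natCast_iff.1 (by exact_mod_cast hsq))
    exact ((Nat.prime_dvd_prime_iff_eq hp' hp).1 hdvd).symm
  · exact absurd (by simpa using hsq) hneg
  · exact absurd (by simpa using hsq) hneg'

theorem eq_of_biquad_prime_neg_eq {p b b' : ℕ} (hp : p.Prime) (hb : Squarefree b)
    (hb' : Squarefree b') (hpb : ¬p ∣ b) (hpb' : ¬p ∣ b')
    (h : biquad p (-b) = biquad p (-b')) : b = b' := by
  obtain ⟨z, hz⟩ := IsAlgClosed.exists_pow_nat_eq (-b' : ℂ) two_pos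
  have hmem : z ∈ biquad p (-b) := h ▸ subset_adjoin _ _ (.inr (by simpa using hz))
  have hneg := not_isSquare_neg_natCast (mul_ne_zero hb'.ne_zero hp.ne_zero)
  rcases isSquare_of_mem_biquad (c := -b') hmem (by simpa using hz) with hsq | hsq | hsq | hsq
  · exact absurd hsq (not_isSquare_neg_natCast hb'.ne_zero)
  · exact absurd (by simpa using hsq) hneg
  · have hsq' : IsSquare (b' * b) := Int.isSquare_natCast_iff.1 (by simpa using hsq)
    exact Nat.dvd_antisymm (dvd_of_squarefree_of_isSquare_mul hb (mul_comm b' b ▸ hsq'))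
      (dvd_of_squarefree_of_isSquare_mul hb' hsq')
  · have hsq' : IsSquare (p * (b' * b)) :=
      Int.isSquare_natCast_iff.1 (by simpa [mul_comm] using hsq)
    rcases hp.dvd_mul.1 (dvd_of_squarefree_of_isSquare_mul hp.prime.squarefree hsq') with h | h
    exacts [absurd h hpb', absurd h hpb]

end Biquadratic

section RealTimesImaginary

variable {a b : ℕ}

theorem ofReal_sqrt_sq : ((√(a : ℝ) : ℝ) : ℂ) ^ 2 = (a : ℤ) := by
  rw [← Complex.ofReal_pow, Real.sq_sqrt a.cast_nonneg, Complex.ofReal_natCast, Int.cast_natCast]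

theorem I_mul_ofReal_sqrt_sq : (Complex.I * (√(b : ℝ) : ℝ)) ^ 2 = (-b : ℤ) := by
  rw [mul_pow, Complex.I_sq, ofReal_sqrt_sq, neg_one_mul, Int.cast_neg]

theorem linearIndependent_sqrt_mul_I_sqrt (ha : ¬IsSquare a) (hb : 0 < b) :
    LinearIndependent ℚ fun ij : Fin 2 × Fin 2 =>
      (![1, √(a : ℝ)] ij.1 : ℝ) • (![1, Complex.I * √(b : ℝ)] ij.2 : ℂ) := by
  have hreal : LinearIndependent ℚ ![1, √(a : ℝ)] :=
    (LinearIndependent.pair_iff' one_ne_zero).2 fun q hq =>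
      irrational_sqrt_natCast_iff.2 ha ⟨q, by simpa [Rat.smul_def] using hq⟩
  have himag : LinearIndependent ℝ ![(1 : ℂ), Complex.I * √(b : ℝ)] :=
    (LinearIndependent.pair_iff' one_ne_zero).2 fun r hr => by
      have him : 0 = √(b : ℝ) := by simpa using congrArg Complex.im hr
      exact him.not_lt (by positivity)
  exact linearIndependent_smul hreal himag

theorem exists_biquad_basis_sq_eq (ha : ¬IsSquare a) (hb : 0 < b) :
    ∃ v : Module.Basis (Fin 2 × Fin 2) ℚ (biquad a (-b)),
      ∀ ij, v ij ^ 2 = ((![1, (a : ℤ)] ij.1 * ![1, -(b : ℤ)] ij.2 : ℤ) : biquad a (-b)) := by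
  let α : biquad a (-b) := ⟨(√(a : ℝ) : ℝ), subset_adjoin _ _ (.inl ofReal_sqrt_sq)⟩
  let β : biquad a (-b) := ⟨Complex.I * √(b : ℝ), subset_adjoin _ _ (.inr I_mul_ofReal_sqrt_sq)⟩
  let u : Fin 2 × Fin 2 → biquad a (-b) := fun ij => ![1, α] ij.1 * ![1, β] ij.2
  have hu : LinearIndependent ℚ u := by
    have hcoe : (biquad a (-b)).val.toLinearMap ∘ u =
        fun ij => (![1, √(a : ℝ)] ij.1 : ℝ) • (![1, Complex.I * √(b : ℝ)] ij.2 : ℂ) := by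
      ext ⟨i, j⟩
      fin_cases i <;> fin_cases j <;> simp [u, α, β]
    refine .of_comp (biquad a (-b)).val.toLinearMap ?_
    rw [hcoe]
    exact linearIndependent_sqrt_mul_I_sqrt ha hb
  have hcard : Fintype.card (Fin 2 × Fin 2) = Module.finrank ℚ (biquad a (-b)) :=
    le_antisymm hu.fintype_card_le_finrank (finrank_biquad_le _ _)
  refine ⟨basisOfLinearIndependentOfCardEqFinrank hu hcard, fun ⟨i, j⟩ => ?_⟩
  have hα : α ^ 2 = a := Subtype.ext (by simpa [α] using ofReal_sqrt_sq)
  have hβ : β ^ 2 = -b := Subtype.ext (by simpa [β] using I_mul_ofReal_sqrt_sq)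
  rw [coe_basisOfLinearIndependentOfCardEqFinrank]
  fin_cases i <;> fin_cases j <;> simp [u, mul_pow, hα, hβ]

theorem finrank_biquad_eq_four (ha : ¬IsSquare a) (hb : 0 < b) :
    Module.finrank ℚ (biquad a (-b)) = 4 := by
  obtain ⟨v, -⟩ := exists_biquad_basis_sq_eq ha hb
  simpa using Module.finrank_eq_card_basis v

theorem absDisc_biquad_le (ha : ¬IsSquare a) (hb : 0 < b) :
    absDisc (biquad a (-b)) ≤ (24 * (a * b)) ^ 2 := by
  obtain ⟨v, hv⟩ := exists_biquad_basis_sq_eq ha hb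
  have h := abs_discr_le_of_sq_eq v hv
  simp only [Fintype.card_prod, Fintype.card_fin, Fintype.prod_prod_type, Fin.prod_univ_two] at h
  rw [absDisc_eq_natAbs_discr, ← Nat.cast_le (α := ℤ), Int.natCast_natAbs]
  refine h.trans (le_of_eq ?_)
  simp [Nat.factorial]
  ring

end RealTimesImaginary

section ElementaryCounts

theorem squarefree_lcm {m n : ℕ} (hm : Squarefree m) (hn : Squarefree n) :
    Squarefree (m.lcm n) := by
  rw [Nat.squarefree_iff_factorization_le_one (Nat.lcm_ne_zero hm.ne_zero hn.ne_zero),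
    Nat.factorization_lcm hm.ne_zero hn.ne_zero]
  exact fun p => sup_le (hm.natFactorization_le_one p) (hn.natFactorization_le_one p)

theorem card_divisors_of_squarefree {m : ℕ} (hm : Squarefree m) :
    m.divisors.card = 2 ^ m.primeFactors.card := by
  rw [Nat.card_divisors hm.ne_zero]
  refine Finset.prod_eq_pow_card fun p hp => ?_
  rw [Nat.factorization_eq_one_of_squarefree hm (Nat.prime_of_mem_primeFactors hp)
    (Nat.dvd_of_mem_primeFactors hp)]

theorem card_int_divisors (m : ℕ) : (Int.divisors m).card = 2 * m.divisors.card := by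
  rw [Int.divisors, Finset.card_disjUnion, Finset.card_map, Finset.card_map, Int.natAbs_natCast,
    two_mul]

theorem sum_inv_odd_sq_le (n : ℕ) :
    ∑ k ∈ Finset.range n, (1 : ℝ) / ((2 * k + 3) ^ 2 : ℕ) ≤ 1 / 4 := by
  let f : ℕ → ℝ := fun k => 1 / (4 * (k + 1))
  have hterm : ∀ k : ℕ, (1 : ℝ) / ((2 * k + 3) ^ 2 : ℕ) ≤ f k - f (k + 1) := fun k => by
    have hk : f k - f (k + 1) = 1 / ((2 * k + 3) ^ 2 - 1) := by
      have hfactor : (2 * (k : ℝ) + 3) ^ 2 - 1 = 4 * (k + 1) * (k + 1 + 1) := by ring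
      simp only [f, hfactor]
      push_cast
      field_simp
      ring
    rw [hk]
    push_cast
    exact one_div_le_one_div_of_le (by nlinarith [k.cast_nonneg (α := ℝ)]) (by linarith)
  calc ∑ k ∈ Finset.range n, (1 : ℝ) / ((2 * k + 3) ^ 2 : ℕ)
      ≤ ∑ k ∈ Finset.range n, (f k - f (k + 1)) := Finset.sum_le_sum fun k _ => hterm k
    _ = f 0 - f n := Finset.sum_range_sub' f n
    _ ≤ 1 / 4 := by
      have hf : 0 ≤ f n := by positivity
      simpa [f] using hf

theorem exists_odd_sq_dvd_of_odd_of_not_squarefree {b : ℕ} (hodd : Odd b) (hb : ¬Squarefree b) :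
    ∃ k < b, (2 * k + 3) ^ 2 ∣ b := by
  obtain ⟨x, hxb, hx⟩ : ∃ x, x * x ∣ b ∧ x ≠ 1 := by simpa [Squarefree] using hb
  obtain ⟨k, rfl⟩ : Odd x := hodd.of_dvd_nat (dvd_of_mul_left_dvd hxb)
  have hle : 2 * k + 1 ≤ b := Nat.le_of_dvd hodd.pos (dvd_of_mul_left_dvd hxb)
  refine ⟨k - 1, by omega, ?_⟩
  rwa [show 2 * (k - 1) + 3 = 2 * k + 1 by omega, sq]

theorem card_odd_not_squarefree_le (N : ℕ) :
    (((Finset.Ioc 0 N).filter fun b => Odd b ∧ ¬Squarefree b).card : ℝ) ≤ N / 4 := by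
  have hsub : ((Finset.Ioc 0 N).filter fun b => Odd b ∧ ¬Squarefree b) ⊆
      (Finset.range N).biUnion fun k => (Finset.Ioc 0 N).filter ((2 * k + 3) ^ 2 ∣ ·) := by
    intro b hb
    obtain ⟨hbN, hodd, hsq⟩ := Finset.mem_filter.1 hb
    obtain ⟨k, hkb, hk⟩ := exists_odd_sq_dvd_of_odd_of_not_squarefree hodd hsq
    exact Finset.mem_biUnion.2 ⟨k, Finset.mem_range.2 (hkb.trans_le (Finset.mem_Ioc.1 hbN).2),
      Finset.mem_filter.2 ⟨hbN, hk⟩⟩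
  have hcard := (Finset.card_le_card hsub).trans Finset.card_biUnion_le
  simp only [Nat.Ioc_filter_dvd_card_eq_div] at hcard
  calc (((Finset.Ioc 0 N).filter fun b => Odd b ∧ ¬Squarefree b).card : ℝ)
      ≤ ∑ k ∈ Finset.range N, ((N / (2 * k + 3) ^ 2 : ℕ) : ℝ) := mod_cast hcard
    _ ≤ ∑ k ∈ Finset.range N, N * ((1 : ℝ) / ((2 * k + 3) ^ 2 : ℕ)) :=
      Finset.sum_le_sum fun k _ => Nat.cast_div_le.trans_eq (mul_one_div _ _).symm
    _ ≤ N / 4 := by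
      rw [← Finset.mul_sum]
      exact (mul_le_mul_of_nonneg_left (sum_inv_odd_sq_le N) N.cast_nonneg).trans_eq (by ring)

/-- The odd squarefree integers in `(0, N]` that are not divisible by `p`: the values of `b` for
which `ℚ(√p, √-b)` is used to bound the size of the family from below. -/
def oddSquarefreePrimeTo (p N : ℕ) : Finset ℕ :=
  (Finset.Ioc 0 N).filter fun b => Odd b ∧ Squarefree b ∧ ¬p ∣ b

theorem div_le_card_oddSquarefreePrimeTo {p : ℕ} (hp : 5 ≤ p) (N : ℕ) :
    (N : ℝ) / 20 ≤ (oddSquarefreePrimeTo p N).card := by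
  have hcover : Finset.Ioc 0 N ⊆ oddSquarefreePrimeTo p N ∪ ((Finset.Ioc 0 N).filter (2 ∣ ·) ∪
      ((Finset.Ioc 0 N).filter (p ∣ ·) ∪
        (Finset.Ioc 0 N).filter fun b => Odd b ∧ ¬Squarefree b)) := by
    intro b hb
    simp only [oddSquarefreePrimeTo, Finset.mem_union, Finset.mem_filter, hb, true_and,
      ← even_iff_two_dvd, ← Nat.not_odd_iff_even]
    tauto
  have hcard := (Finset.card_le_card hcover).trans ((Finset.card_union_le _ _).trans
    (Nat.add_le_add_left ((Finset.card_union_le _ _).trans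
      (Nat.add_le_add_left (Finset.card_union_le _ _) _)) _))
  rw [Nat.card_Ioc, Nat.sub_zero, Nat.Ioc_filter_dvd_card_eq_div,
    Nat.Ioc_filter_dvd_card_eq_div] at hcard
  have htwo : ((N / 2 : ℕ) : ℝ) ≤ N / 2 := mod_cast Nat.cast_div_le (α := ℝ) (m := N) (n := 2)
  have hfive : ((N / p : ℕ) : ℝ) ≤ N / 5 :=
    Nat.cast_div_le.trans (div_le_div_of_nonneg_left N.cast_nonneg (by norm_num) (mod_cast hp))
  have hsq := card_odd_not_squarefree_le N
  rw [← Nat.cast_le (α := ℝ)] at hcard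
  simp only [Nat.cast_add] at hcard
  linarith

theorem exists_finset_primes_sum_inv_ge (N : ℕ) (A : ℝ) :
    ∃ P : Finset ℕ, (∀ p ∈ P, p.Prime ∧ N ≤ p) ∧ A ≤ ∑ p ∈ P, (1 : ℝ) / p := by
  let f : ℕ → ℝ := {p : ℕ | p.Prime}.indicator fun n => 1 / n
  have hf : ¬Summable fun n => f (n + N) :=
    mt (summable_nat_add_iff N).1 not_summable_one_div_on_primes
  have hf0 : ∀ n, 0 ≤ f (n + N) := fun n => Set.indicator_nonneg (fun _ _ => by positivity) _
  obtain ⟨M, hM⟩ := ((not_summable_iff_tendsto_nat_atTop_of_nonneg hf0).1 hf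
    |>.eventually_ge_atTop A).exists
  refine ⟨((Finset.range M).map (addRightEmbedding N)).filter Nat.Prime, fun p hp => ?_, ?_⟩
  · obtain ⟨hpM, hprime⟩ := Finset.mem_filter.1 hp
    obtain ⟨n, -, rfl⟩ := Finset.mem_map.1 hpM
    exact ⟨hprime, Nat.le_add_left N n⟩
  · rw [Finset.sum_filter, Finset.sum_map]
    simpa [f, Set.indicator_apply] using hM

end ElementaryCounts

section FieldCounts

/-- The fields of the family with `|Δ_K| ≤ X`, as a set. -/
def biquadFamilyUpTo (X : ℝ) : Set (IntermediateField ℚ ℂ) :=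
  {K | K ∈ biquadFamily ∧ (absDisc K : ℝ) ≤ X}

theorem finite_biquadFamilyUpTo (X : ℝ) : (biquadFamilyUpTo X).Finite := by
  refine ((finite_of_discr_bdd ℂ ⌊X⌋₊).image Subtype.val).subset ?_
  rintro K ⟨⟨a, b, -, -, -, -, -, rfl⟩, hX⟩
  refine ⟨⟨biquad a b, inferInstance⟩, ?_, rfl⟩
  have hfloor : absDisc (biquad a b) ≤ ⌊X⌋₊ := Nat.le_floor hX
  rw [absDisc_eq_natAbs_discr] at hfloor
  rw [Set.mem_ofPred_eq, Int.abs_eq_natAbs]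
  exact_mod_cast hfloor

theorem exists_squarefree_sq_dvd_absDisc {K : IntermediateField ℚ ℂ} (hK : K ∈ biquadFamily) :
    ∃ m : ℕ, Squarefree m ∧ m ^ 2 ∣ absDisc K ∧ absDisc K ≠ 0 ∧
      ∃ a ∈ Int.divisors m, ∃ b ∈ Int.divisors m, K = biquad a b := by
  obtain ⟨a, b, -, -, ha, hb, hfin, rfl⟩ := hK
  have hlcm : Squarefree (a.natAbs.lcm b.natAbs) :=
    squarefree_lcm (Int.squarefree_natAbs.2 ha) (Int.squarefree_natAbs.2 hb)
  have hlcm0 : ((a.natAbs.lcm b.natAbs : ℕ) : ℤ) ≠ 0 := mod_cast hlcm.ne_zero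
  exact ⟨_, hlcm, lcm_sq_dvd_absDisc_biquad hfin ha hb, absDisc_ne_zero _,
    a, Int.mem_divisors.2 ⟨Int.dvd_natCast.2 (Nat.dvd_lcm_left _ _), hlcm0⟩,
    b, Int.mem_divisors.2 ⟨Int.dvd_natCast.2 (Nat.dvd_lcm_right _ _), hlcm0⟩, rfl⟩

/-- The fields `ℚ(√a, √b)` with `a` and `b` dividing a common `m ∈ (0, N]` that has at most `d`
positive and negative divisors. With `m = lcm(a, b)` they exhaust the fields of bounded
discriminant and bounded genus number. -/
def biquadsOfDivisors (d N : ℕ) : Finset (IntermediateField ℚ ℂ) :=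
  ((Finset.Ioc 0 N).filter fun m : ℕ => (Int.divisors m).card ≤ d).biUnion fun m =>
    Finset.image₂ biquad (Int.divisors m) (Int.divisors m)

theorem card_biquadsOfDivisors_le (d N : ℕ) : (biquadsOfDivisors d N).card ≤ N * d ^ 2 := by
  refine (Finset.card_biUnion_le_card_mul _ _ (d ^ 2) fun m hm => ?_).trans
    (Nat.mul_le_mul_right _ ((Finset.card_filter_le _ _).trans_eq (Nat.card_Ioc 0 N)))
  have hd := (Finset.mem_filter.1 hm).2
  exact (Finset.card_image₂_le _ _ _).trans ((Nat.mul_le_mul hd hd).trans_eq (sq d).symm)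

theorem mem_biquadsOfDivisors {K : IntermediateField ℚ ℂ} (hK : K ∈ biquadFamily) {X : ℝ}
    (hX : absDisc K ≤ X) :
    K ∈ biquadsOfDivisors (2 ^ ((absDisc K).primeFactors.card + 1)) ⌊√X⌋₊ := by
  obtain ⟨m, hm, hdvd, h0, a, ha, b, hb, hab⟩ := exists_squarefree_sq_dvd_absDisc hK
  have hmX : (m : ℝ) ≤ √X := by
    refine Real.le_sqrt_of_sq_le (le_trans ?_ hX)
    exact_mod_cast Nat.le_of_dvd (Nat.pos_of_ne_zero h0) hdvd
  have hω : m.primeFactors.card ≤ (absDisc K).primeFactors.card :=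
    Finset.card_le_card (Nat.primeFactors_mono (dvd_of_mul_left_dvd (sq m ▸ hdvd)) h0)
  have hdiv : (Int.divisors m).card ≤ 2 ^ ((absDisc K).primeFactors.card + 1) := by
    rw [card_int_divisors, card_divisors_of_squarefree hm, ← pow_succ']
    exact Nat.pow_le_pow_right two_pos (Nat.succ_le_succ hω)
  exact Finset.mem_biUnion.2 ⟨m, Finset.mem_filter.2
    ⟨Finset.mem_Ioc.2 ⟨Nat.pos_of_ne_zero hm.ne_zero, Nat.le_floor hmX⟩, hdiv⟩,
    Finset.mem_image₂.2 ⟨a, ha, b, hb, hab.symm⟩⟩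

theorem countSn_le (n : ℕ) (X : ℝ) : (countSn n X : ℝ) ≤ 4 ^ (n + 3) * √X := by
  have hsub : {K | K ∈ biquadFamily ∧ (absDisc K).primeFactors.card = n + 2 ∧ absDisc K ≤ X} ⊆
      (biquadsOfDivisors (2 ^ (n + 3)) ⌊√X⌋₊ : Set (IntermediateField ℚ ℂ)) :=
    fun K ⟨hK, hω, hX⟩ => by
      have hmem := mem_biquadsOfDivisors hK hX
      rwa [hω] at hmem
  have hcard : countSn n X ≤ ⌊√X⌋₊ * (2 ^ (n + 3)) ^ 2 :=
    (Set.ncard_le_ncard hsub).trans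
      ((Set.ncard_coe_finset _).trans_le (card_biquadsOfDivisors_le _ _))
  calc (countSn n X : ℝ) ≤ ⌊√X⌋₊ * (2 ^ (n + 3)) ^ 2 := mod_cast hcard
    _ ≤ √X * (2 ^ (n + 3)) ^ 2 := by
      gcongr
      exact Nat.floor_le (Real.sqrt_nonneg X)
    _ = 4 ^ (n + 3) * √X := by rw [pow_right_comm, mul_comm]; norm_num

theorem biquad_mem_biquadFamilyUpTo {p b : ℕ} (hp : p.Prime) (hp2 : p ≠ 2) (hodd : Odd b)
    (hb : Squarefree b) {X : ℝ} (hX : 24 * (p * b : ℝ) ≤ √X) :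
    biquad p (-b) ∈ biquadFamilyUpTo X := by
  have hpsq : ¬IsSquare p := hp.prime.not_isSquare
  refine ⟨⟨p, -b, mod_cast hp.odd_of_ne_two hp2, mod_cast hodd.natCast.neg,
    Int.squarefree_natCast.2 hp.prime.squarefree,
    Int.squarefree_natAbs.1 (by simpa using hb), finrank_biquad_eq_four hpsq hodd.pos, rfl⟩, ?_⟩
  have hpos : 0 < 24 * (p * b : ℝ) := by
    have := hp.pos
    have := hodd.pos
    positivity
  calc (absDisc (biquad p (-b)) : ℝ) ≤ (24 * (p * b)) ^ 2 :=
        mod_cast absDisc_biquad_le hpsq hodd.pos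
    _ ≤ X := (Real.le_sqrt' hpos).1 hX

theorem sum_card_oddSquarefreePrimeTo_le_countS {P : Finset ℕ} (hP : ∀ p ∈ P, p.Prime ∧ 5 ≤ p)
    (X : ℝ) :
    ∑ p ∈ P, (oddSquarefreePrimeTo p ⌊√X / (24 * p)⌋₊).card ≤ countS X := by
  let S : Finset (Σ _ : ℕ, ℕ) := P.sigma fun p => oddSquarefreePrimeTo p ⌊√X / (24 * p)⌋₊
  have hmem : ∀ s ∈ (S : Set (Σ _ : ℕ, ℕ)), s.1.Prime ∧ s.1 ≠ 2 ∧ Odd s.2 ∧ Squarefree s.2 ∧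
      ¬s.1 ∣ s.2 ∧ 24 * (s.1 * s.2 : ℝ) ≤ √X := fun ⟨p, b⟩ hs => by
    obtain ⟨hpP, hb⟩ := Finset.mem_sigma.1 (Finset.mem_coe.1 hs)
    obtain ⟨hbX, hodd, hsq, hpb⟩ := Finset.mem_filter.1 hb
    obtain ⟨hp, hp5⟩ := hP p hpP
    have hp0 : (0 : ℝ) < 24 * p := by
      have := hp.pos
      positivity
    have hfloor := (Nat.le_floor_iff (by positivity)).1 (Finset.mem_Ioc.1 hbX).2
    rw [le_div_iff₀ hp0] at hfloor
    exact ⟨hp, (show p ≠ 2 by omega), hodd, hsq, hpb, by linarith⟩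
  have hinj : Set.InjOn (fun s : Σ _ : ℕ, ℕ => biquad s.1 (-s.2)) S := by
    rintro ⟨p, b⟩ hs ⟨p', b'⟩ hs' h
    obtain ⟨hp, -, -, hb, hpb, -⟩ := hmem _ hs
    obtain ⟨hp', -, -, hb', hpb', -⟩ := hmem _ hs'
    obtain rfl := prime_eq_of_biquad_neg_eq hp hp' hb.ne_zero h
    obtain rfl := eq_of_biquad_prime_neg_eq hp hb hb' hpb hpb' h
    rfl
  have hncard := Set.ncard_le_ncard_of_injOn _ (fun s hs => by
    obtain ⟨hp, hp2, hodd, hb, -, hX⟩ := hmem s hs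
    exact biquad_mem_biquadFamilyUpTo hp hp2 hodd hb hX) hinj (finite_biquadFamilyUpTo X)
  rwa [Set.ncard_coe_finset, Finset.card_sigma] at hncard

theorem sqrt_mul_sum_inv_sub_card_le_countS {P : Finset ℕ} (hP : ∀ p ∈ P, p.Prime ∧ 5 ≤ p)
    (X : ℝ) : √X / 480 * ∑ p ∈ P, (1 : ℝ) / p - P.card ≤ countS X := by
  have hterm : ∀ p ∈ P, √X / 480 * (1 / p) - 1 ≤
      (oddSquarefreePrimeTo p ⌊√X / (24 * p)⌋₊).card := fun p hp => by
    have hcard := div_le_card_oddSquarefreePrimeTo (hP p hp).2 ⌊√X / (24 * p)⌋₊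
    have hfloor := Nat.lt_floor_add_one (√X / (24 * p))
    have hscale : √X / 480 * (1 / p) = √X / (24 * p) / 20 := by ring
    linarith
  calc √X / 480 * ∑ p ∈ P, (1 : ℝ) / p - P.card = ∑ p ∈ P, (√X / 480 * (1 / p) - 1) := by
        simp [Finset.mul_sum]
    _ ≤ ∑ p ∈ P, ((oddSquarefreePrimeTo p ⌊√X / (24 * p)⌋₊).card : ℝ) := Finset.sum_le_sum hterm
    _ ≤ countS X := mod_cast sum_card_oddSquarefreePrimeTo_le_countS hP X

theorem tendsto_countS_div_sqrt_atTop :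
    Tendsto (fun X : ℝ => (countS X : ℝ) / √X) atTop atTop := by
  refine tendsto_atTop.2 fun A => ?_
  obtain ⟨P, hP, hA⟩ := exists_finset_primes_sum_inv_ge 5 (480 * (A + 1))
  filter_upwards [Real.tendsto_sqrt_atTop.eventually_ge_atTop (P.card : ℝ), eventually_gt_atTop 0]
    with X hPX hX
  rw [le_div_iff₀ (Real.sqrt_pos.2 hX)]
  have hmain : √X / 480 * (480 * (A + 1)) ≤ √X / 480 * ∑ p ∈ P, (1 : ℝ) / p := by gcongr
  linarith [sqrt_mul_sum_inv_sub_card_le_countS hP X]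

end FieldCounts

theorem stmt18 (n : ℕ) (hn : 1 ≤ n) :
    Tendsto (fun X : ℝ => (countSn n X : ℝ) / (countS X : ℝ)) atTop (nhds 0) := by
  have hlimit : Tendsto (fun X : ℝ => 4 ^ (n + 3) * ((countS X : ℝ) / √X)⁻¹) atTop (nhds 0) := by
    simpa using tendsto_countS_div_sqrt_atTop.inv_tendsto_atTop.const_mul (4 ^ (n + 3) : ℝ)
  refine squeeze_zero (fun X => by positivity) (fun X => ?_) hlimit
  calc (countSn n X : ℝ) / countS X ≤ 4 ^ (n + 3) * √X / countS X := by
        gcongr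
        exact countSn_le n X
    _ = 4 ^ (n + 3) * ((countS X : ℝ) / √X)⁻¹ := by rw [inv_div, mul_div_assoc]
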